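/- arXiv:1709.03447 — 2 statements merged into one kernel-verified Lean document; each statement's English description precedes it below -/
import Mathlib

section
/- Let h : ℝ → ℝ be C^∞ with iteratedDeriv (2*j+1) h 0 = 0 for every j ∈ ℕ. Define F : ℝ → ℝ by F(r) = (deriv h r)/r for r ≠ 0 and F(0) = iteratedDeriv 2 h 0. Then F is C^∞ on ℝ and, moreover, all derivatives of odd order of F vanish at 0, i.e. iteratedDeriv (2*j+1) F 0 = 0 for every j ∈ ℕ. -/
open Set MeasureTheory Topology in
/-- Differentiation under the integral sign for the weighted averages of `φ` over `[0, r]`. -/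
theorem hasDerivAt_integral_pow_mul_comp_mul {φ : ℝ → ℝ} (hφ : ContDiff ℝ 1 φ) (k : ℕ) (r : ℝ) :
    HasDerivAt (fun r => ∫ t in (0 : ℝ)..1, t ^ k * φ (t * r))
      (∫ t in (0 : ℝ)..1, t ^ (k + 1) * deriv φ (t * r)) r := by
  have hφc : Continuous φ := hφ.continuous
  have hφ' : Continuous (deriv φ) := hφ.continuous_deriv_one
  have hcont : Continuous fun p : ℝ × ℝ => p.2 ^ (k + 1) * deriv φ (p.2 * p.1) := by fun_prop
  obtain ⟨C, hC⟩ := ((isCompact_closedBall r 1).prod isCompact_Icc).exists_bound_of_continuousOn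
    (f := fun p : ℝ × ℝ => p.2 ^ (k + 1) * deriv φ (p.2 * p.1))
    (s := Metric.closedBall r 1 ×ˢ Icc 0 1) hcont.continuousOn
  refine (intervalIntegral.hasDerivAt_integral_of_dominated_loc_of_deriv_le
    (F := fun r t => t ^ k * φ (t * r)) (F' := fun r t => t ^ (k + 1) * deriv φ (t * r))
    (bound := fun _ => C) (Metric.closedBall_mem_nhds r one_pos)
    (.of_forall fun x => ?_) ?_ ?_ (.of_forall fun t ht x hx => ?_) ?_
    (.of_forall fun t _ x _ => ?_)).2
  · exact Continuous.aestronglyMeasurable (by fun_prop)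
  · exact Continuous.intervalIntegrable (by fun_prop) _ _
  · exact Continuous.aestronglyMeasurable (by fun_prop)
  · rw [uIoc_of_le zero_le_one] at ht
    exact hC (x, t) ⟨hx, ht.1.le, ht.2⟩
  · exact intervalIntegrable_const
  · have hd : HasDerivAt φ (deriv φ (t * x)) (t * x) :=
      (hφ.differentiable one_ne_zero _).hasDerivAt
    refine ((hd.comp x (hasDerivAt_const_mul t)).const_mul (t ^ k)).congr_deriv ?_
    ring

theorem contDiff_iteratedDeriv {φ : ℝ → ℝ} (hφ : ContDiff ℝ (⊤ : ℕ∞) φ) (n : ℕ) :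
    ContDiff ℝ (⊤ : ℕ∞) (iteratedDeriv n φ) := by
  rw [iteratedDeriv_eq_iterate]
  exact hφ.iterate_deriv n

theorem iteratedDeriv_integral_comp_mul {φ : ℝ → ℝ} (hφ : ContDiff ℝ (⊤ : ℕ∞) φ) (n : ℕ) :
    iteratedDeriv n (fun r => ∫ t in (0 : ℝ)..1, φ (t * r)) =
      fun r => ∫ t in (0 : ℝ)..1, t ^ n * iteratedDeriv n φ (t * r) := by
  induction n with
  | zero => simp
  | succ n ih =>
    funext r
    rw [iteratedDeriv_succ, ih, iteratedDeriv_succ]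
    exact (hasDerivAt_integral_pow_mul_comp_mul
      ((contDiff_iteratedDeriv hφ n).of_le (by exact_mod_cast le_top)) n r).deriv

theorem contDiff_integral_comp_mul {φ : ℝ → ℝ} (hφ : ContDiff ℝ (⊤ : ℕ∞) φ) :
    ContDiff ℝ (⊤ : ℕ∞) fun r => ∫ t in (0 : ℝ)..1, φ (t * r) := by
  refine contDiff_of_differentiable_iteratedDeriv fun n _ r => ?_
  rw [iteratedDeriv_integral_comp_mul hφ]
  exact (hasDerivAt_integral_pow_mul_comp_mul
    ((contDiff_iteratedDeriv hφ n).of_le (by exact_mod_cast le_top)) n r).differentiableAt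

theorem iteratedDeriv_integral_comp_mul_zero {φ : ℝ → ℝ} (hφ : ContDiff ℝ (⊤ : ℕ∞) φ) (n : ℕ) :
    iteratedDeriv n (fun r => ∫ t in (0 : ℝ)..1, φ (t * r)) 0 =
      iteratedDeriv n φ 0 / (n + 1) := by
  simp [iteratedDeriv_integral_comp_mul hφ, div_eq_inv_mul]

/-- Hadamard's lemma in one variable. -/
theorem mul_integral_deriv_comp_mul {g : ℝ → ℝ} (hg : ContDiff ℝ 1 g) (r : ℝ) :
    r * ∫ t in (0 : ℝ)..1, deriv g (t * r) = g r - g 0 := by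
  rw [intervalIntegral.mul_integral_comp_mul_right, zero_mul, one_mul]
  exact intervalIntegral.integral_deriv_eq_sub
    (fun x _ => hg.differentiable one_ne_zero x)
    (hg.continuous_deriv_one.intervalIntegrable _ _)

/-- **Auxiliary one-variable fact.** If `h : ℝ → ℝ` is `C^∞` with all odd-order derivatives
vanishing at `0`, and `F r = (deriv h r) / r` for `r ≠ 0`, `F 0 = h''(0)`, then `F` is `C^∞`
and all its odd-order derivatives vanish at `0` as well. -/
theorem deriv_div_self_smooth_even
    (h : ℝ → ℝ) (hh : ContDiff ℝ (⊤ : ℕ∞) h)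
    (hodd : ∀ j : ℕ, iteratedDeriv (2 * j + 1) h 0 = 0)
    (F : ℝ → ℝ)
    (hF : ∀ r : ℝ, r ≠ 0 → F r = deriv h r / r)
    (hF0 : F 0 = iteratedDeriv 2 h 0) :
    ContDiff ℝ (⊤ : ℕ∞) F ∧ ∀ j : ℕ, iteratedDeriv (2 * j + 1) F 0 = 0 := by
  have hg : ContDiff ℝ (⊤ : ℕ∞) (deriv h) := hh.iterate_deriv 1
  have hg' : ContDiff ℝ (⊤ : ℕ∞) (deriv (deriv h)) := hh.iterate_deriv 2
  have hg0 : deriv h 0 = 0 := by simpa using hodd 0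
  have hFeq : F = fun r => ∫ t in (0 : ℝ)..1, deriv (deriv h) (t * r) := by
    funext r
    rcases eq_or_ne r 0 with rfl | hr
    · simp [hF0, iteratedDeriv_succ']
    · rw [hF r hr, div_eq_iff hr, mul_comm,
        mul_integral_deriv_comp_mul (hg.of_le (by exact_mod_cast le_top)), hg0, sub_zero]
  subst hFeq
  refine ⟨contDiff_integral_comp_mul hg', fun j => ?_⟩
  rw [iteratedDeriv_integral_comp_mul_zero hg', ← iteratedDeriv_succ', ← iteratedDeriv_succ',
    show 2 * j + 1 + 1 + 1 = 2 * (j + 1) + 1 by ring, hodd, zero_div]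
end

section
/- Let n ≥ 1, let E = EuclideanSpace ℝ (Fin n), and let σ denote the canonical surface measure on the unit sphere S = {ω ∈ E : ‖ω‖ = 1}. Let u : ℝ × E → ℝ be C^∞ on (0,∞) × E and suppose that u solves the heat equation with Dirichlet boundary conditions on the closed unit ball: for all t > 0 and all x with ‖x‖ ≤ 1, ∂u/∂t(t,x) = Δ(u(t,·))(x), and u(t,y) = 0 whenever ‖y‖ = 1 and t > 0 (Δ being the analyst's Laplacian on E). Define v : ℝ × E → ℝ by v(t,x) = ⨍_S u(t, ‖x‖ • ω) dσ(ω). Then for all t > 0 and all x with ‖x‖ ≤ 1 one has ∂v/∂t(t,x) = Δ(v(t,·))(x), and v(t,y) = 0 whenever ‖y‖ = 1 and t > 0. -/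
open MeasureTheory

/-- The analyst's Laplacian on `EuclideanSpace ℝ (Fin n)`: the sum of the pure second
directional derivatives along the standard orthonormal basis. -/
noncomputable def laplacian {n : ℕ} (f : EuclideanSpace ℝ (Fin n) → ℝ)
    (x : EuclideanSpace ℝ (Fin n)) : ℝ :=
  ∑ i : Fin n, iteratedFDeriv ℝ 2 f x
    ![EuclideanSpace.single i (1 : ℝ), EuclideanSpace.single i (1 : ℝ)]

open Set Function Filter Topology
open scoped Pointwise

section ParametricIntegral

set_option maxSynthPendingDepth 3

variable {K H W : Type*} [TopologicalSpace K] [CompactSpace K]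
  [MeasurableSpace K] [OpensMeasurableSpace K]
  [NormedAddCommGroup H] [NormedSpace ℝ H]
  [NormedAddCommGroup W] [NormedSpace ℝ W]

theorem contDiff_fderiv_comp_clm {f : H → W} (hf : ContDiff ℝ 2 f) :
    ContDiff ℝ 1 (uncurry fun (A : H →L[ℝ] H) (y : H) => fderiv ℝ (fun y => f (A y)) y) :=
  ContDiff.fderiv (n := 1) (m := 2) (f := fun (q : (H →L[ℝ] H) × H) y => f (q.1 y))
    (g := fun q => q.2) (hf.comp ((contDiff_fst.fst).clm_apply contDiff_snd)) contDiff_snd (by norm_num)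

theorem integrable_fderiv_fderiv_comp_clm_map (μ : Measure K) [IsFiniteMeasure μ]
    {c : K → H →L[ℝ] H} (hc : Continuous c) {f : H → W} (hf : ContDiff ℝ 2 f) (x : H) :
    Integrable (fun k => fderiv ℝ (fderiv ℝ (fun y => f (c k y))) x) μ := by
  have hΦ'' : Continuous fun q : (H →L[ℝ] H) × H =>
      fderiv ℝ (fderiv ℝ (fun y => f (q.1 y))) q.2 :=
    (ContDiff.fderiv (n := 0) (m := 1)
      (f := fun (q : (H →L[ℝ] H) × H) => fderiv ℝ (fun y => f (q.1 y))) (g := fun q => q.2)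
      ((contDiff_fderiv_comp_clm hf).comp ((contDiff_fst.fst).prodMk contDiff_snd))
      contDiff_snd (by simp)).continuous
  exact (hΦ''.comp (hc.prodMk continuous_const)).integrable_of_hasCompactSupport
    (HasCompactSupport.of_compactSpace _)

theorem integrable_fderiv_fderiv_comp_clm (μ : Measure K) [IsFiniteMeasure μ]
    {c : K → H →L[ℝ] H} (hc : Continuous c) {f : H → W} (hf : ContDiff ℝ 2 f) (x a b : H) :
    Integrable (fun k => fderiv ℝ (fderiv ℝ (fun y => f (c k y))) x a b) μ :=
  ((integrable_fderiv_fderiv_comp_clm_map μ hc hf x).apply_continuousLinearMap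
    a).apply_continuousLinearMap b

variable [SecondCountableTopology K] [FiniteDimensional ℝ H]

/-- Differentiation under the integral sign over a compact space, for an integrand which is jointly
continuous together with its derivative on an open set of parameters. -/
theorem hasFDerivAt_integral_of_continuousOn (μ : Measure K) [IsFiniteMeasure μ]
    {F : K → H → W} {F' : K → H → H →L[ℝ] W} {U : Set H} (hU : IsOpen U)
    (hF : ContinuousOn (uncurry F) (univ ×ˢ U)) (hF' : ContinuousOn (uncurry F') (univ ×ˢ U))
    (hFF' : ∀ k, ∀ x ∈ U, HasFDerivAt (F k) (F' k x) x) {x : H} (hx : x ∈ U) :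
    HasFDerivAt (fun y => ∫ k, F k y ∂μ) (∫ k, F' k x ∂μ) x := by
  have : ProperSpace H := FiniteDimensional.proper ℝ H
  obtain ⟨s, hs, hsU, hsc⟩ := local_compact_nhds (hU.mem_nhds hx)
  obtain ⟨C, hC⟩ := (isCompact_univ.prod hsc).exists_bound_of_continuousOn
    (hF'.mono (prod_mono_right hsU))
  have hFc {y : H} (hy : y ∈ U) : Continuous fun k => F k y :=
    hF.comp_continuous (f := fun k : K => (k, y)) (by fun_prop) fun k => ⟨mem_univ k, hy⟩
  have hFc' : Continuous fun k => F' k x :=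
    hF'.comp_continuous (f := fun k : K => (k, x)) (by fun_prop) fun k => ⟨mem_univ k, hx⟩
  refine hasFDerivAt_integral_of_dominated_of_fderiv_le (F := fun y k => F k y)
    (F' := fun y k => F' k y) (bound := fun _ => C) hs ?_ ?_ ?_ ?_ (integrable_const C) ?_
  · filter_upwards [hU.mem_nhds hx] with y hy
    exact (hFc hy).aestronglyMeasurable
  · exact (hFc hx).integrable_of_hasCompactSupport (HasCompactSupport.of_compactSpace _)
  · exact hFc'.aestronglyMeasurable
  · exact ae_of_all _ fun k y hy => hC (k, y) ⟨mem_univ k, hy⟩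
  · exact ae_of_all _ fun k y hy => hFF' k y (hsU hy)

/-- The first derivative of an integral over a compact space of a smooth integrand whose parameter
enters through a continuous map into a normed space. -/
theorem fderiv_integral_of_contDiff (μ : Measure K) [IsFiniteMeasure μ]
    {P : Type*} [NormedAddCommGroup P] [NormedSpace ℝ P] {c : K → P} (hc : Continuous c)
    {Φ : P → H → W} (hΦ : ContDiff ℝ 1 (uncurry Φ)) :
    fderiv ℝ (fun y => ∫ k, Φ (c k) y ∂μ) = fun x => ∫ k, fderiv ℝ (Φ (c k)) x ∂μ := by
  funext x
  have hmap : Continuous fun q : K × H => (c q.1, q.2) := by fun_prop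
  have hΦ' : Continuous fun q : P × H => fderiv ℝ (Φ q.1) q.2 :=
    (ContDiff.fderiv (n := 0) (m := 1) (f := fun q : P × H => Φ q.1) (g := fun q => q.2)
      (hΦ.comp ((contDiff_fst.fst).prodMk contDiff_snd)) contDiff_snd (by simp)).continuous
  refine (hasFDerivAt_integral_of_continuousOn μ (F := fun k => Φ (c k))
    (F' := fun k x => fderiv ℝ (Φ (c k)) x) isOpen_univ (hΦ.continuous.comp hmap).continuousOn
    (hΦ'.comp hmap).continuousOn (fun k y _ => ?_) (mem_univ x)).fderiv
  have : ContDiff ℝ 1 (Φ (c k)) := hΦ.comp (contDiff_prodMk_right (c k))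
  exact (this.differentiable (by simp) y).hasFDerivAt

theorem fderiv_fderiv_integral_comp_clm [CompleteSpace W] (μ : Measure K) [IsFiniteMeasure μ]
    {c : K → H →L[ℝ] H} (hc : Continuous c) {f : H → W} (hf : ContDiff ℝ 2 f) (x a b : H) :
    fderiv ℝ (fderiv ℝ (fun y => ∫ k, f (c k y) ∂μ)) x a b =
      ∫ k, fderiv ℝ (fderiv ℝ (fun y => f (c k y))) x a b ∂μ := by
  have hΦ : ContDiff ℝ 2 (uncurry fun (A : H →L[ℝ] H) (y : H) => f (A y)) :=
    hf.comp (contDiff_fst.clm_apply contDiff_snd)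
  have h₁ : fderiv ℝ (fun y => ∫ k, f (c k y) ∂μ) =
      fun x => ∫ k, fderiv ℝ (fun y => f (c k y)) x ∂μ :=
    fderiv_integral_of_contDiff μ hc (hΦ.of_le (by norm_num))
  have h₂ : fderiv ℝ (fun x => ∫ k, fderiv ℝ (fun y => f (c k y)) x ∂μ) =
      fun x => ∫ k, fderiv ℝ (fderiv ℝ (fun y => f (c k y))) x ∂μ :=
    fderiv_integral_of_contDiff μ hc (contDiff_fderiv_comp_clm hf)
  have hint := integrable_fderiv_fderiv_comp_clm_map μ hc hf x
  rw [h₁, h₂]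
  dsimp only
  rw [ContinuousLinearMap.integral_apply hint,
    ContinuousLinearMap.integral_apply (hint.apply_continuousLinearMap a)]

end ParametricIntegral

local notation "Euc" n:max => EuclideanSpace ℝ (Fin n)

section Laplacian

variable {n : ℕ}

theorem laplacian_eq_sum_fderiv_fderiv (f : Euc n → ℝ) (x : Euc n) :
    laplacian f x = ∑ i : Fin n, fderiv ℝ (fderiv ℝ f) x (EuclideanSpace.single i 1)
      (EuclideanSpace.single i 1) := by
  simp [laplacian, iteratedFDeriv_two_apply]

theorem laplacian_eq_innerProductSpace_laplacian (f : Euc n → ℝ) :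
    laplacian f = Laplacian.laplacian f := by
  funext x
  rw [InnerProductSpace.laplacian_eq_iteratedFDeriv_orthonormalBasis f
    (EuclideanSpace.basisFun (Fin n) ℝ)]
  simp [laplacian]

theorem laplacian_comp_linearIsometryEquiv {f : Euc n → ℝ}
    (hf : ContDiff ℝ 2 f) (e : Euc n ≃ₗᵢ[ℝ] Euc n)
    (x : Euc n) :
    laplacian (fun y => f (e y)) x = laplacian f (e x) := by
  rw [laplacian_eq_innerProductSpace_laplacian f,
    InnerProductSpace.laplacian_eq_iteratedFDeriv_orthonormalBasis f
      ((EuclideanSpace.basisFun (Fin n) ℝ).map e), laplacian]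
  refine Finset.sum_congr rfl fun i _ => ?_
  have := (e : Euc n →L[ℝ] Euc n).iteratedFDeriv_comp_right
    hf x (i := 2) le_rfl
  change iteratedFDeriv ℝ 2 (f ∘ (e : Euc n →L[ℝ] _)) x _ = _
  rw [this, ContinuousMultilinearMap.compContinuousLinearMap_apply]
  congr 1
  funext j
  fin_cases j <;> simp

/-- The Laplacian commutes with averaging over a compact family of linear isometries. -/
theorem laplacian_integral_comp_isometry {K : Type*} [TopologicalSpace K] [CompactSpace K]
    [SecondCountableTopology K] [MeasurableSpace K] [OpensMeasurableSpace K]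
    (μ : Measure K) [IsFiniteMeasure μ]
    {e : K → Euc n ≃ₗᵢ[ℝ] Euc n}
    (he : Continuous fun k => (e k : Euc n →L[ℝ] Euc n))
    {f : Euc n → ℝ} (hf : ContDiff ℝ 2 f) (x : Euc n) :
    laplacian (fun y => ∫ k, f (e k y) ∂μ) x = ∫ k, laplacian f (e k x) ∂μ := by
  simp_rw [← laplacian_comp_linearIsometryEquiv hf, laplacian_eq_sum_fderiv_fderiv]
  have hint (i : Fin n) : Integrable (fun k => fderiv ℝ (fderiv ℝ fun y => f (e k y)) x
      (EuclideanSpace.single i 1) (EuclideanSpace.single i 1)) μ :=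
    integrable_fderiv_fderiv_comp_clm μ he hf x _ _
  rw [integral_finsetSum _ fun i _ => hint i]
  exact Finset.sum_congr rfl fun i _ => fderiv_fderiv_integral_comp_clm μ he hf x _ _

end Laplacian

section Rotations

variable {E : Type*} [NormedAddCommGroup E] [InnerProductSpace ℝ E]

theorem exists_linearIsometryEquiv_apply_eq {x y : E} (h : ‖x‖ = ‖y‖) :
    ∃ e : E ≃ₗᵢ[ℝ] E, e x = y :=
  ⟨_, Submodule.reflection_sub h⟩

variable [FiniteDimensional ℝ E]

instance compactSpace_unitary_continuousLinearMap : CompactSpace (unitary (E →L[ℝ] E)) := by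
  have : ProperSpace (E →L[ℝ] E) := FiniteDimensional.proper ℝ _
  refine isCompact_iff_compactSpace.mp (Metric.isCompact_of_isClosed_isBounded isClosed_unitary
    ((Metric.isBounded_closedBall (x := (0 : E →L[ℝ] E)) (r := 1)).subset fun A hA => ?_))
  rw [mem_closedBall_zero_iff]
  exact ContinuousLinearMap.opNorm_le_bound _ zero_le_one fun x => by
    rw [one_mul]
    exact ((Unitary.linearIsometryEquiv ⟨A, hA⟩).norm_map x).le

instance secondCountable_unitary_continuousLinearMap :
    SecondCountableTopology (unitary (E →L[ℝ] E)) := by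
  have : ProperSpace (E →L[ℝ] E) := FiniteDimensional.proper ℝ _
  infer_instance

variable [MeasurableSpace E] [BorelSpace E]

/-- The surface measure on the unit sphere is invariant under linear isometries. -/
theorem integral_toSphere_comp_linearIsometryEquiv (e : E ≃ₗᵢ[ℝ] E) (f : E → ℝ) :
    ∫ ω : Metric.sphere (0 : E) 1, f (e ω) ∂(volume : Measure E).toSphere =
      ∫ ω : Metric.sphere (0 : E) 1, f ω ∂(volume : Measure E).toSphere := by
  let T : Metric.sphere (0 : E) 1 ≃ₜ Metric.sphere (0 : E) 1 :=
    e.toHomeomorph.subtype fun x => by simp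
  have hT : MeasurePreserving T (volume : Measure E).toSphere (volume : Measure E).toSphere := by
    refine ⟨T.continuous.measurable, Measure.ext fun s hs => ?_⟩
    rw [Measure.map_apply T.continuous.measurable hs,
      Measure.toSphere_apply' _ (T.continuous.measurable hs), Measure.toSphere_apply' _ hs,
      ← e.measurePreserving.measure_preimage_emb e.toHomeomorph.measurableEmbedding
        (Ioo (0 : ℝ) 1 • (Subtype.val '' s))]
    congr 2
    ext x
    simp only [Set.mem_smul, Set.mem_preimage, Set.mem_image]
    constructor
    · rintro ⟨r, hr, _, ⟨ω, hω, rfl⟩, rfl⟩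
      exact ⟨r, hr, e ω, ⟨T ω, hω, rfl⟩, by simp⟩
    · rintro ⟨r, hr, _, ⟨ω, hω, rfl⟩, h⟩
      refine ⟨r, hr, T.symm ω, ⟨T.symm ω, by simpa using hω, rfl⟩, e.injective ?_⟩
      have : e (T.symm ω) = ω := congrArg Subtype.val (T.apply_symm_apply ω)
      rw [map_smul, this]
      exact h
  exact hT.integral_comp T.measurableEmbedding fun ω => f ω

/-- Averaging over the sphere of radius `‖x‖` is the same as averaging over the orbit of `x` under
the orthogonal group. -/
theorem average_toSphere_eq_integral_unitary [Nontrivial E] (μ : Measure (unitary (E →L[ℝ] E)))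
    [IsProbabilityMeasure μ] [μ.IsMulLeftInvariant] {f : E → ℝ} (hf : Continuous f) (x : E) :
    ⨍ ω : Metric.sphere (0 : E) 1, f (‖x‖ • (ω : E)) ∂(volume : Measure E).toSphere =
      ∫ g, f (Unitary.linearIsometryEquiv g⁻¹ x) ∂μ := by
  set σ := (volume : Measure E).toSphere
  have orbit (ω : Metric.sphere (0 : E) 1) :
      ∫ g, f (‖x‖ • Unitary.linearIsometryEquiv g⁻¹ (ω : E)) ∂μ =
        ∫ g, f (Unitary.linearIsometryEquiv g⁻¹ x) ∂μ := by
    obtain ⟨e, he⟩ := exists_linearIsometryEquiv_apply_eq (x := x) (y := ‖x‖ • (ω : E))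
      (by simp [norm_smul])
    rw [← integral_mul_left_eq_self (μ := μ)
      (fun g => f (Unitary.linearIsometryEquiv g⁻¹ x)) (Unitary.linearIsometryEquiv.symm e)⁻¹]
    refine integral_congr_ae (ae_of_all _ fun g => ?_)
    simp only [mul_inv_rev, inv_inv, map_mul, MulEquiv.apply_symm_apply,
      LinearIsometryEquiv.coe_mul, comp_apply, he, map_smul]
  have hcont : Continuous (uncurry fun (ω : Metric.sphere (0 : E) 1) (g : unitary (E →L[ℝ] E)) =>
      f (‖x‖ • Unitary.linearIsometryEquiv g⁻¹ (ω : E))) := by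
    change Continuous fun q : Metric.sphere (0 : E) 1 × unitary (E →L[ℝ] E) =>
      f (‖x‖ • ((q.2⁻¹ : unitary (E →L[ℝ] E)) : E →L[ℝ] E) (q.1 : E))
    fun_prop
  have key : ∫ ω : Metric.sphere (0 : E) 1, f (‖x‖ • (ω : E)) ∂σ =
      σ.real univ * ∫ g, f (Unitary.linearIsometryEquiv g⁻¹ x) ∂μ := by
    calc
      _ = ∫ g, ∫ ω : Metric.sphere (0 : E) 1,
            f (‖x‖ • Unitary.linearIsometryEquiv g⁻¹ (ω : E)) ∂σ ∂μ := by
        simp_rw [σ, fun g : unitary (E →L[ℝ] E) => integral_toSphere_comp_linearIsometryEquiv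
          (Unitary.linearIsometryEquiv g⁻¹) fun y => f (‖x‖ • y)]
        simp
      _ = ∫ ω : Metric.sphere (0 : E) 1, ∫ g,
            f (‖x‖ • Unitary.linearIsometryEquiv g⁻¹ (ω : E)) ∂μ ∂σ :=
        (integral_integral_swap_of_hasCompactSupport hcont
          (HasCompactSupport.of_compactSpace _)).symm
      _ = _ := by simp_rw [orbit]; simp
  have hσ : σ.real univ ≠ 0 := by
    rw [Ne, measureReal_eq_zero_iff, Measure.measure_univ_eq_zero]
    exact (volume : Measure E).toSphere_ne_zero
  rw [average_eq, key, smul_eq_mul, inv_mul_cancel_left₀ hσ]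

/-- Spherical averages are averages over a compact family of linear isometries. -/
theorem exists_isometry_family_average_toSphere.{u} (E : Type u) [NormedAddCommGroup E]
    [InnerProductSpace ℝ E] [FiniteDimensional ℝ E] [MeasurableSpace E] [BorelSpace E]
    [Nontrivial E] :
    ∃ (K : Type u) (_ : TopologicalSpace K) (_ : CompactSpace K) (_ : SecondCountableTopology K)
      (_ : MeasurableSpace K) (_ : OpensMeasurableSpace K) (μ : Measure K)
      (_ : IsProbabilityMeasure μ) (e : K → E ≃ₗᵢ[ℝ] E),
      (Continuous fun k => (e k : E →L[ℝ] E)) ∧ ∀ f : E → ℝ, Continuous f → ∀ x : E,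
        ⨍ ω : Metric.sphere (0 : E) 1, f (‖x‖ • (ω : E)) ∂(volume : Measure E).toSphere =
          ∫ k, f (e k x) ∂μ := by
  let K₀ : TopologicalSpace.PositiveCompacts (unitary (E →L[ℝ] E)) := ⊤
  have : IsProbabilityMeasure (Measure.haarMeasure K₀) :=
    ⟨by simpa [K₀] using Measure.haarMeasure_self (K₀ := K₀)⟩
  refine ⟨unitary (E →L[ℝ] E), inferInstance, inferInstance, inferInstance, inferInstance,
    inferInstance, Measure.haarMeasure K₀, this, fun g => Unitary.linearIsometryEquiv g⁻¹, ?_,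
    fun f hf x => average_toSphere_eq_integral_unitary _ hf x⟩
  change Continuous fun g : unitary (E →L[ℝ] E) => ((g⁻¹ : unitary (E →L[ℝ] E)) : E →L[ℝ] E)
  fun_prop

end Rotations

/-- **Radialization preserves solutions of the heat equation with Dirichlet boundary conditions
on the unit ball.** If `u` is `C^∞` on `(0,∞) × E` and solves `∂u/∂t = Δu` on the closed unit
ball with `u = 0` on the unit sphere (for all `t > 0`), then its radialization
`v(t,x) = ⨍_S u(t, ‖x‖ • ω) dσ(ω)` does the same. -/
theorem radialization_heat_solution
    (n : ℕ) (hn : 1 ≤ n)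
    (u : ℝ × EuclideanSpace ℝ (Fin n) → ℝ)
    (hu : ContDiffOn ℝ (⊤ : ℕ∞) u (Set.Ioi (0 : ℝ) ×ˢ (Set.univ : Set (EuclideanSpace ℝ (Fin n)))))
    (hheat : ∀ t : ℝ, 0 < t → ∀ x : EuclideanSpace ℝ (Fin n), ‖x‖ ≤ 1 →
      deriv (fun s => u (s, x)) t = laplacian (fun y => u (t, y)) x)
    (hbdry : ∀ t : ℝ, 0 < t → ∀ y : EuclideanSpace ℝ (Fin n), ‖y‖ = 1 → u (t, y) = 0)
    (v : ℝ × EuclideanSpace ℝ (Fin n) → ℝ)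
    (hv : ∀ t : ℝ, ∀ x : EuclideanSpace ℝ (Fin n), v (t, x) =
      ⨍ ω : Metric.sphere (0 : EuclideanSpace ℝ (Fin n)) 1,
        u (t, ‖x‖ • (ω : EuclideanSpace ℝ (Fin n)))
        ∂((volume : Measure (EuclideanSpace ℝ (Fin n))).toSphere)) :
    (∀ t : ℝ, 0 < t → ∀ x : EuclideanSpace ℝ (Fin n), ‖x‖ ≤ 1 →
      deriv (fun s => v (s, x)) t = laplacian (fun y => v (t, y)) x) ∧
    (∀ t : ℝ, 0 < t → ∀ y : EuclideanSpace ℝ (Fin n), ‖y‖ = 1 → v (t, y) = 0) := by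
  have : Nonempty (Fin n) := ⟨⟨0, hn⟩⟩
  obtain ⟨K, _, _, _, _, _, μ, _, e, he, haverage⟩ :=
    exists_isometry_family_average_toSphere (Euc n)
  have hopen : IsOpen (Ioi (0 : ℝ) ×ˢ (univ : Set (Euc n))) := isOpen_Ioi.prod isOpen_univ
  have hslice (t : ℝ) (ht : 0 < t) : ContDiff ℝ 2 fun y => u (t, y) :=
    contDiffOn_univ.mp ((hu.of_le (m := 2)
      (WithTop.coe_le_coe.2 (le_top : (2 : ℕ∞) ≤ ⊤))).comp
      (contDiff_prodMk_right t).contDiffOn fun y _ => ⟨ht, mem_univ y⟩)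
  have hvint (t : ℝ) (ht : 0 < t) (x : Euc n) : v (t, x) = ∫ g, u (t, e g x) ∂μ := by
    rw [hv]
    exact haverage (fun y => u (t, y)) (hslice t ht).continuous x
  refine ⟨fun t ht x hx => ?_, fun t ht y hy => ?_⟩
  · have horbit : Continuous fun q : K × ℝ => (q.2, e q.1 x) :=
      continuous_snd.prodMk ((he.comp continuous_fst).clm_apply continuous_const)
    have hmaps : MapsTo (fun q : K × ℝ => (q.2, e q.1 x))
        (univ ×ˢ Ioi 0) (Ioi (0 : ℝ) ×ˢ univ) := fun q hq => ⟨hq.2, mem_univ _⟩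
    have hu' : ContinuousOn (fderiv ℝ u) (Ioi (0 : ℝ) ×ˢ univ) :=
      hu.continuousOn_fderiv_of_isOpen hopen (by exact_mod_cast le_top)
    have hd (g : K) (s : ℝ) (hs : s ∈ Ioi (0 : ℝ)) :
        HasFDerivAt (fun s => u (s, e g x))
          ((fderiv ℝ u (s, e g x)).comp (ContinuousLinearMap.inl ℝ ℝ (Euc n))) s :=
      ((hu.differentiableOn (by simp)).differentiableAt
        (hopen.mem_nhds ⟨hs, mem_univ (e g x)⟩)).hasFDerivAt.comp s (hasFDerivAt_prodMk_left s _)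
    have hF' : ContinuousOn (uncurry fun (g : K) (s : ℝ) =>
        (fderiv ℝ u (s, e g x)).comp (ContinuousLinearMap.inl ℝ ℝ (Euc n))) (univ ×ˢ Ioi 0) :=
      (hu'.comp horbit.continuousOn hmaps).clm_comp continuousOn_const
    have hderiv := (hasFDerivAt_integral_of_continuousOn μ
      (F := fun (g : K) (s : ℝ) => u (s, e g x)) isOpen_Ioi
      (hu.continuousOn.comp horbit.continuousOn hmaps) hF' hd ht).hasDerivAt
    have hint : Integrable (fun g => (fderiv ℝ u (t, e g x)).comp
        (ContinuousLinearMap.inl ℝ ℝ (Euc n))) μ :=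
      (hF'.comp_continuous (f := fun g => (g, t)) (by fun_prop)
        fun g => ⟨mem_univ g, ht⟩).integrable_of_hasCompactSupport
          (HasCompactSupport.of_compactSpace _)
    have hvt : (fun s => v (s, x)) =ᶠ[𝓝 t] fun s => ∫ g, u (s, e g x) ∂μ := by
      filter_upwards [isOpen_Ioi.mem_nhds ht] with s hs using hvint s hs x
    rw [hvt.deriv_eq, hderiv.deriv, ContinuousLinearMap.integral_apply hint]
    simp_rw [hvint t ht]
    rw [laplacian_integral_comp_isometry μ he (hslice t ht)]
    refine integral_congr_ae (ae_of_all _ fun g => ?_)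
    simp only [← hheat t ht (e g x) (by simpa using hx), (hd g t ht).hasDerivAt.deriv]
  · rw [hv]
    have (ω : Metric.sphere (0 : Euc n) 1) : u (t, ‖y‖ • (ω : Euc n)) = 0 :=
      hbdry t ht _ (by simp [hy])
    simp [this]
end
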